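/- Assume 𝔟 = 𝔡. Then every unbounded set X ⊆ [ω]^ω is ≤_U-unbounded for some free ultrafilter U on ℕ. -/

import Mathlib

open Cardinal

/-- `a ≤* b`: the set `[a ≤ b]` is cofinite. -/
def LeStar (a b : ℕ → ℕ) : Prop := {n | ¬ a n ≤ b n}.Finite

/-- `a ≤^∞ b`: the set `[a ≤ b]` is infinite. -/
def LeInf (a b : ℕ → ℕ) : Prop := {n | a n ≤ b n}.Infinite

/-- `a ≤_U b`: the set `[a ≤ b]` belongs to the ultrafilter `U`. -/
def LeU (U : Ultrafilter ℕ) (a b : ℕ → ℕ) : Prop := {n | a n ≤ b n} ∈ U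

/-- An ultrafilter is free if it extends the cofinite filter. -/
def Free (U : Ultrafilter ℕ) : Prop := (U : Filter ℕ) ≤ Filter.cofinite

/-- Elements of `[ω]^ω`, identified with their increasing enumerations. -/
abbrev IncSeq : Type := {f : ℕ → ℕ // StrictMono f}

/-- A subset of `[ω]^ω` is bounded if some element of `[ω]^ω` `≤*`-dominates it. -/
def Bounded (A : Set IncSeq) : Prop := ∃ b : IncSeq, ∀ a ∈ A, LeStar a.1 b.1

/-- A subset of `[ω]^ω` is dominating if it `≤*`-dominates every element of `[ω]^ω`. -/
def Dominating (D : Set IncSeq) : Prop := ∀ a : IncSeq, ∃ d ∈ D, LeStar a.1 d.1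

/-- A subset of `[ω]^ω` is `≤_U`-bounded if some element of `[ω]^ω` `≤_U`-dominates it. -/
def UBounded (U : Ultrafilter ℕ) (A : Set IncSeq) : Prop := ∃ b : IncSeq, ∀ a ∈ A, LeU U a.1 b.1

/-- `𝔟`: the least cardinality of an unbounded subset of `[ω]^ω`. -/
noncomputable def frakB : Cardinal := sInf {c | ∃ A : Set IncSeq, ¬ Bounded A ∧ c = #A}

/-- `𝔡`: the least cardinality of a dominating subset of `[ω]^ω`. -/
noncomputable def frakD : Cardinal := sInf {c | ∃ D : Set IncSeq, Dominating D ∧ c = #D}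

/-- `𝔟(U)`: the least cardinality of a `≤_U`-unbounded subset of `[ω]^ω`. -/
noncomputable def frakBU (U : Ultrafilter ℕ) : Cardinal :=
  sInf {c | ∃ A : Set IncSeq, ¬ UBounded U A ∧ c = #A}

/-- A set `A ⊆ [ω]^ω` is `𝔡`-unbounded if `|A| ≥ 𝔡` and every bounded subset of `A`
has cardinality less than `𝔡`. -/
def DUnbounded (A : Set IncSeq) : Prop :=
  frakD ≤ #A ∧ ∀ B ⊆ A, Bounded B → #B < frakD

/-! Enumerate a dominating family as `d i`, for `i < 𝔡`, and choose recursively `x i ∈ X` such that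
the sets `[d i < x i]` have infinite finite intersections; then `X` is `≤_U`-unbounded for every
free ultrafilter `U` containing all of them. At stage `i` there are fewer than `𝔡 = 𝔟` infinite
intersections `F` of earlier sets, so some `x ∈ X` is not dominated by any of the sequences
`n ↦ d i (F n)`. Then `x (F n) ≥ x n > d i (F n)` for infinitely many `n`, that is,
`F ∩ [d i < x]` is infinite. -/

open Set Filter

/-- The strong finite intersection property of an indexed family of sets: every intersection of
finitely many members is infinite. It characterizes the families contained in a free ultrafilter. -/
def StrongFIP {ι α : Type*} (S : ι → Set α) : Prop :=
  ∀ s : Finset ι, (⋂ i ∈ s, S i).Infinite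

theorem StrongFIP.exists_ultrafilter {ι α : Type*} {S : ι → Set α} (hS : StrongFIP S) :
    ∃ U : Ultrafilter α, (U : Filter α) ≤ cofinite ∧ ∀ i, S i ∈ U := by
  have hne : ((⨅ i, 𝓟 (S i)) ⊓ cofinite).NeBot := by
    rw [(hasBasis_iInf_principal_finite S).inf_neBot_iff]
    intro t ht c hc
    have hinf : ((⋂ i ∈ ht.toFinset, S i) \ cᶜ).Infinite := (hS _).sdiff (mem_cofinite.1 hc)
    simpa only [Finite.mem_toFinset, sdiff_compl] using hinf.nonempty
  obtain ⟨U, hU⟩ := Ultrafilter.exists_le ((⨅ i, 𝓟 (S i)) ⊓ cofinite)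
  exact ⟨U, hU.trans inf_le_right, fun i =>
    le_principal_iff.1 ((hU.trans inf_le_left).trans (iInf_le _ i))⟩

theorem StrongFIP.of_forall_Iio {κ α : Type*} [LinearOrder κ] [Infinite α] {S : κ → Set α}
    (hS : ∀ (i : κ) (s : Finset (Iio i)),
      (⋂ j ∈ s, S j).Infinite → ((⋂ j ∈ s, S j) ∩ S i).Infinite) : StrongFIP S := by
  intro s
  induction s using Finset.induction_on_max with
  | empty => simpa using infinite_univ
  | insert i s hs ih =>
    have hinter : ⋂ j ∈ s.subtype (· ∈ Iio i), S j = ⋂ j ∈ s, S j := by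
      ext n
      simp only [mem_iInter, Finset.mem_subtype, Subtype.forall, mem_Iio]
      exact ⟨fun h j hj => h j (hs j hj) hj, fun h j _ hj => h j hj⟩
    rw [Finset.set_biInter_insert, inter_comm, ← hinter]
    exact hS i _ (hinter ▸ ih)

theorem exists_forall_of_wellFoundedLT {κ α : Type*} [Preorder κ] [WellFoundedLT κ]
    {P : ∀ i : κ, (Iio i → α) → α → Prop} (hP : ∀ i f, ∃ a, P i f a) :
    ∃ x : κ → α, ∀ i, P i (fun j => x j) (x i) := by
  choose next hnext using hP
  let x : κ → α := wellFounded_lt.fix fun i ih => next i fun j => ih j j.2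
  have hx : ∀ i, x i = next i fun j => x j := fun i => WellFounded.fix_eq _ _ i
  exact ⟨x, fun i => by rw [hx i]; exact hnext i _⟩

theorem mk_finset_lt_of_aleph0_le {κ : Type*} {c : Cardinal} (hc : ℵ₀ ≤ c) (hκ : #κ < c) :
    #(Finset κ) < c := by
  rcases finite_or_infinite κ with hfin | hinf
  · exact mk_lt_aleph0.trans_le hc
  · rwa [mk_finset_of_infinite]

theorem not_leStar_iff {a b : ℕ → ℕ} : ¬ LeStar a b ↔ {n | b n < a n}.Infinite := by
  simp only [LeStar, not_le, Set.Infinite]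

theorem LeStar.refl (a : ℕ → ℕ) : LeStar a a :=
  EventuallyLE.refl cofinite a

theorem LeStar.trans {a b c : ℕ → ℕ} (hab : LeStar a b) (hbc : LeStar b c) : LeStar a c :=
  EventuallyLE.trans (f := a) (l := cofinite) hab hbc

theorem infinite_inter_of_not_leStar_comp_nth {F : Set ℕ} (hF : F.Infinite) {d x : ℕ → ℕ}
    (hx : Monotone x) (h : ¬ LeStar x (d ∘ Nat.nth (· ∈ F))) :
    (F ∩ {n | d n < x n}).Infinite := by
  have hnth : StrictMono (Nat.nth (· ∈ F)) := Nat.nth_strictMono hF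
  refine ((not_leStar_iff.1 h).image hnth.injective.injOn).mono ?_
  rintro _ ⟨n, hn, rfl⟩
  exact ⟨Nat.nth_mem_of_infinite hF n, lt_of_lt_of_le hn (hx (hnth.id_le n))⟩

theorem bounded_of_finite {A : Set IncSeq} (hA : A.Finite) : Bounded A := by
  let b : ℕ → ℕ := fun n => (hA.toFinset.sup fun a => a.1 n) + n
  have hb : StrictMono b := Monotone.add_strictMono
    (fun _ _ hmn => Finset.sup_mono_fun fun a _ => a.2.monotone hmn) strictMono_id
  refine ⟨⟨b, hb⟩, fun a ha => Eventually.of_forall (f := cofinite) fun n => ?_⟩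
  exact le_add_right (Finset.le_sup (f := fun a : IncSeq => a.1 n) (hA.mem_toFinset.2 ha))

theorem not_bounded_univ : ¬ Bounded univ := by
  rintro ⟨b, hb⟩
  have hsucc : LeStar (fun n => b.1 n + 1) b.1 := hb ⟨_, b.2.add_const 1⟩ (mem_univ _)
  refine not_leStar_iff.2 ?_ hsucc
  simpa only [Nat.lt_add_one, ofPred_true] using infinite_univ

theorem aleph0_le_frakB : ℵ₀ ≤ frakB := by
  refine le_csInf ⟨_, univ, not_bounded_univ, rfl⟩ ?_
  rintro _ ⟨A, hA, rfl⟩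
  exact aleph0_le_mk_iff.2 (infinite_coe_iff.2 (mt bounded_of_finite hA))

theorem bounded_of_mk_lt_frakB {A : Set IncSeq} (hA : #A < frakB) : Bounded A := by
  by_contra hunb
  exact notMem_of_lt_csInf' hA ⟨A, hunb, rfl⟩

theorem exists_dominating_range : ∃ d : frakD.ord.ToType → IncSeq, Dominating (range d) := by
  obtain ⟨D, hD, hcard⟩ : frakD ∈ {c | ∃ D : Set IncSeq, Dominating D ∧ c = #D} :=
    csInf_mem ⟨_, univ, fun a => ⟨a, mem_univ a, LeStar.refl a.1⟩, rfl⟩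
  obtain ⟨e⟩ : Nonempty (frakD.ord.ToType ≃ D) := Cardinal.eq.1 (by rw [mk_ord_toType, hcard])
  refine ⟨fun i => e i, ?_⟩
  rwa [← Function.comp_def Subtype.val e, e.surjective.range_comp, Subtype.range_coe]

section Unbounded

variable {X : Set IncSeq}

theorem exists_mem_forall_not_leStar (hX : ¬ Bounded X) {A : Set IncSeq} (hA : Bounded A) :
    ∃ x ∈ X, ∀ a ∈ A, ¬ LeStar x.1 a.1 := by
  obtain ⟨b, hb⟩ := hA
  by_contra! hdom
  refine hX ⟨b, fun x hx => ?_⟩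
  obtain ⟨a, ha, hxa⟩ := hdom x hx
  exact hxa.trans (hb a ha)

theorem exists_mem_forall_infinite_inter (hX : ¬ Bounded X) {ι : Type} (hι : #ι < frakB)
    (F : ι → Set ℕ) (d : IncSeq) :
    ∃ x ∈ X, ∀ i, (F i).Infinite → (F i ∩ {n | d.1 n < x.1 n}).Infinite := by
  let g : {i // (F i).Infinite} → IncSeq := fun i =>
    ⟨d.1 ∘ Nat.nth (· ∈ F i), d.2.comp (Nat.nth_strictMono i.2)⟩
  have hg : Bounded (range g) :=
    bounded_of_mk_lt_frakB ((mk_range_le.trans (mk_subtype_le _)).trans_lt hι)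
  obtain ⟨x, hxX, hx⟩ := exists_mem_forall_not_leStar hX hg
  exact ⟨x, hxX, fun i hi =>
    infinite_inter_of_not_leStar_comp_nth hi x.2.monotone (hx _ ⟨⟨i, hi⟩, rfl⟩)⟩

theorem exists_strongFIP_setOf_lt (hX : ¬ Bounded X) {κ : Type} [LinearOrder κ] [WellFoundedLT κ]
    (hκ : ∀ i : κ, #(Iio i) < frakB) (d : κ → IncSeq) :
    ∃ x : κ → IncSeq, (∀ i, x i ∈ X) ∧ StrongFIP fun i => {n | (d i).1 n < (x i).1 n} := by
  obtain ⟨x, hx⟩ := exists_forall_of_wellFoundedLT fun (i : κ) (f : Iio i → IncSeq) =>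
    exists_mem_forall_infinite_inter hX (mk_finset_lt_of_aleph0_le aleph0_le_frakB (hκ i))
      (fun s => ⋂ j ∈ s, {n | (d j).1 n < (f j).1 n}) (d i)
  exact ⟨x, fun i => (hx i).1, .of_forall_Iio fun i => (hx i).2⟩

theorem not_uBounded_of_dominating {U : Ultrafilter ℕ} (hU : Free U) {D : Set IncSeq}
    (hD : Dominating D) (h : ∀ d ∈ D, ∃ x ∈ X, {n | d.1 n < x.1 n} ∈ U) : ¬ UBounded U X := by
  rintro ⟨b, hb⟩
  obtain ⟨d, hd, hbd⟩ := hD b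
  obtain ⟨x, hx, hdx⟩ := h d hd
  have hbdU : ∀ᶠ n in (U : Filter ℕ), b.1 n ≤ d.1 n := hU hbd
  have hxb : ∀ᶠ n in (U : Filter ℕ), x.1 n ≤ b.1 n := hb x hx
  obtain ⟨n, hbdn, hxbn, hdxn⟩ := (hbdU.and (hxb.and hdx)).exists
  exact (hxbn.trans hbdn).not_gt hdxn

end Unbounded

/-- assume `𝔟 = 𝔡`. Then every unbounded set `X ⊆ [ω]^ω` is
`≤_U`-unbounded for some free ultrafilter `U`. -/
theorem stmt11 (hbd : frakB = frakD)
    (X : Set IncSeq) (hX : ¬ Bounded X) :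
    ∃ U : Ultrafilter ℕ, Free U ∧ ¬ UBounded U X := by
  obtain ⟨d, hd⟩ := exists_dominating_range
  have hIio : ∀ i : frakD.ord.ToType, #(Iio i) < frakB := fun i => by
    simpa only [mk_ord_toType, hbd] using mk_Iio_lt i (by simp)
  obtain ⟨x, hxX, hx⟩ := exists_strongFIP_setOf_lt hX hIio d
  obtain ⟨U, hU, hmem⟩ := hx.exists_ultrafilter
  refine ⟨U, hU, not_uBounded_of_dominating hU hd ?_⟩
  rintro _ ⟨i, rfl⟩
  exact ⟨x i, hxX i, hmem i⟩
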